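/- arXiv:1305.0620 — 3 statements merged into one kernel-verified Lean document; each statement's English description precedes it below -/
import Mathlib

section
/- Let X_ρ be a ρ-complete modular space whose modular ρ has the Fatou property. If T : X_ρ → X_ρ is a mapping for which there exists c ∈ [0,1) with ρ(Tx − Ty) ≤ c·ρ(x − y) for all x, y ∈ X_ρ, and sup_{n≥1} ρ(2Tⁿω) < ∞ for some ω ∈ X_ρ, then T has a fixed point. -/
open Filter Topology ENNReal NNReal

variable {X : Type*} [AddCommGroup X] [Module ℝ X]

/-- A modular on a real vector space `X`. -/
def IsModular (ρ : X → ℝ≥0∞) : Prop :=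
  (∀ x : X, ρ x = 0 ↔ x = 0) ∧ (∀ x : X, ρ (-x) = ρ x) ∧
    (∀ x y : X, ∀ α β : ℝ, 0 ≤ α → 0 ≤ β → α + β = 1 →
      ρ (α • x + β • y) ≤ ρ x + ρ y)

/-- For `s ∈ (0,1]`, an `s`-convex modular on a real vector space `X`. -/
def IsSConvexModular (ρ : X → ℝ≥0∞) (s : ℝ) : Prop :=
  (∀ x : X, ρ x = 0 ↔ x = 0) ∧ (∀ x : X, ρ (-x) = ρ x) ∧
    (∀ x y : X, ∀ a b : ℝ, 0 ≤ a → 0 ≤ b → a ^ s + b ^ s = 1 →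
      ρ (a • x + b • y) ≤ ENNReal.ofReal (a ^ s) * ρ x + ENNReal.ofReal (b ^ s) * ρ y)

/-- The modular space `X_ρ = {x ∈ X : ρ(αx) → 0 as α → 0}`. -/
def modularSpace (ρ : X → ℝ≥0∞) : Set X :=
  {x : X | Tendsto (fun α : ℝ => ρ (α • x)) (𝓝 0) (𝓝 0)}

/-- `ρ`-convergence of a sequence to a point: `ρ(x_n − a) → 0`. -/
def RhoTendsto (ρ : X → ℝ≥0∞) (x : ℕ → X) (a : X) : Prop :=
  Tendsto (fun n => ρ (x n - a)) atTop (𝓝 0)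

/-- A sequence is `ρ`-Cauchy if `ρ(x_m − x_n) → 0` as `m, n → ∞`. -/
def RhoCauchy (ρ : X → ℝ≥0∞) (x : ℕ → X) : Prop :=
  Tendsto (fun p : ℕ × ℕ => ρ (x p.1 - x p.2)) (atTop ×ˢ atTop) (𝓝 0)

/-- `X_ρ` is `ρ`-complete if every `ρ`-Cauchy sequence in `X_ρ`
is `ρ`-convergent to a point of `X_ρ`. -/
def RhoComplete (ρ : X → ℝ≥0∞) : Prop :=
  ∀ x : ℕ → X, (∀ n, x n ∈ modularSpace ρ) → RhoCauchy ρ x →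
    ∃ a ∈ modularSpace ρ, RhoTendsto ρ x a

/-- The Fatou property of a modular. -/
def FatouProperty (ρ : X → ℝ≥0∞) : Prop :=
  ∀ (x y : ℕ → X) (a b : X), RhoTendsto ρ x a → RhoTendsto ρ y b →
    ρ (a - b) ≤ atTop.liminf (fun n => ρ (x n - y n))

/-- The `Δ₂`-type condition with constant `k`: `ρ(2x) ≤ k·ρ(x)` on `X_ρ`. -/
def Delta2Type (ρ : X → ℝ≥0∞) (k : ℝ≥0) : Prop :=
  ∀ x ∈ modularSpace ρ, ρ ((2 : ℝ) • x) ≤ (k : ℝ≥0∞) * ρ x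

/-- The `Δ₂`-condition: for sequences in `X_ρ`, `ρ(x_n) → 0` implies `ρ(2x_n) → 0`. -/
def Delta2Condition (ρ : X → ℝ≥0∞) : Prop :=
  ∀ x : ℕ → X, (∀ n, x n ∈ modularSpace ρ) →
    Tendsto (fun n => ρ (x n)) atTop (𝓝 0) →
      Tendsto (fun n => ρ ((2 : ℝ) • x n)) atTop (𝓝 0)

/-- The `F`-norm associated with a modular: `‖x‖_ρ = inf {t > 0 : ρ(x/t) ≤ t}`. -/
noncomputable def fnorm (ρ : X → ℝ≥0∞) (x : X) : ℝ :=
  sInf {t : ℝ | 0 < t ∧ ρ (t⁻¹ • x) ≤ ENNReal.ofReal t}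

/-!
Convexity with weights `1/2` is the only triangle inequality available:
`ρ ((x - y) / 2) ≤ ρ x + ρ y`. Applied to `2x` and `2y` it bounds `ρ (Tⁿω - Tω)` uniformly in `n`,
and then the contraction inequality iterates to `ρ (Tⁿ⁺ᵏω - Tⁿω) = O(cⁿ)` without any chaining of
triangle inequalities, so the orbit is `ρ`-Cauchy. Both its `ρ`-limit `a` and `T a` are `ρ`-limits
of the orbit, and `ρ`-limits are unique because halving a vector does not change whether it is
zero.
-/

section AddCommGroup

variable {G : Type*} [AddCommGroup G] {ρ : G → ℝ≥0∞}

theorem RhoTendsto.comp_succ {x : ℕ → G} {a : G} (hx : RhoTendsto ρ x a) :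
    RhoTendsto ρ (fun n => x (n + 1)) a :=
  (tendsto_add_atTop_iff_nat (f := fun n => ρ (x n - a)) 1).2 hx

theorem rhoCauchy_of_le_of_tendsto_zero (hneg : ∀ x, ρ (-x) = ρ x) {x : ℕ → G} {b : ℕ → ℝ≥0∞}
    (hx : ∀ n k, ρ (x (n + k) - x n) ≤ b n) (hb : Tendsto b atTop (𝓝 0)) : RhoCauchy ρ x := by
  have sum_tendsto : Tendsto (fun p : ℕ × ℕ => b p.1 + b p.2) (atTop ×ˢ atTop) (𝓝 0) := by
    simpa only [add_zero, Function.comp_apply] using (hb.comp tendsto_fst).add (hb.comp tendsto_snd)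
  refine tendsto_of_tendsto_of_tendsto_of_le_of_le tendsto_const_nhds sum_tendsto
    (fun _ => zero_le) ?_
  rintro ⟨m, n⟩
  rcases le_total m n with hmn | hnm
  · obtain ⟨k, rfl⟩ := Nat.exists_eq_add_of_le hmn
    calc ρ (x m - x (m + k)) = ρ (x (m + k) - x m) := by rw [← hneg, neg_sub]
      _ ≤ b m := hx m k
      _ ≤ b m + b (m + k) := le_self_add
  · obtain ⟨k, rfl⟩ := Nat.exists_eq_add_of_le hnm
    exact (hx n k).trans le_add_self

/-- `T` is Lipschitz on `S` with constant `c` with respect to `ρ`, the quantity `ρ (x - y)` playing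
the role of the distance; for `c < 1` these are the `ρ`-contractions. -/
def RhoLipschitzOnWith (ρ : G → ℝ≥0∞) (c : ℝ≥0) (T : G → G) (S : Set G) : Prop :=
  ∀ x ∈ S, ∀ y ∈ S, ρ (T x - T y) ≤ c * ρ (x - y)

namespace RhoLipschitzOnWith

variable {c : ℝ≥0} {T : G → G} {S : Set G}

theorem iterate (hT : RhoLipschitzOnWith ρ c T S) (hTS : Set.MapsTo T S S) (n : ℕ) :
    RhoLipschitzOnWith ρ (c ^ n) T^[n] S := by
  intro x hx y hy
  induction n with
  | zero => simp
  | succ n ih =>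
    simp only [Function.iterate_succ_apply']
    calc ρ (T (T^[n] x) - T (T^[n] y))
        ≤ c * ρ (T^[n] x - T^[n] y) := hT _ (hTS.iterate n hx) _ (hTS.iterate n hy)
      _ ≤ c * (↑(c ^ n) * ρ (x - y)) := by gcongr
      _ = ↑(c ^ (n + 1)) * ρ (x - y) := by rw [← mul_assoc, ← ENNReal.coe_mul, pow_succ']

theorem rhoTendsto (hT : RhoLipschitzOnWith ρ c T S) {x : ℕ → G} {a : G} (hxS : ∀ n, x n ∈ S)
    (haS : a ∈ S) (hx : RhoTendsto ρ x a) : RhoTendsto ρ (fun n => T (x n)) (T a) := by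
  have bound_tendsto : Tendsto (fun n => c * ρ (x n - a)) atTop (𝓝 0) := by
    simpa only [mul_zero] using ENNReal.Tendsto.const_mul hx (Or.inr ENNReal.coe_ne_top)
  exact tendsto_of_tendsto_of_tendsto_of_le_of_le tendsto_const_nhds bound_tendsto
    (fun _ => zero_le) fun n => hT _ (hxS n) _ haS

theorem rhoCauchy_iterate (hT : RhoLipschitzOnWith ρ c T S) (hneg : ∀ x, ρ (-x) = ρ x)
    (hc : c < 1) (hTS : Set.MapsTo T S S) {ω : G} (hω : ω ∈ S)
    (hbdd : (⨆ n, ρ (T^[n] ω - ω)) < ⊤) : RhoCauchy ρ (fun n => T^[n] ω) := by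
  set M := ⨆ n, ρ (T^[n] ω - ω)
  have bound_tendsto : Tendsto (fun n : ℕ => (c : ℝ≥0∞) ^ n * M) atTop (𝓝 0) := by
    simpa only [zero_mul] using ENNReal.Tendsto.mul_const
      (ENNReal.tendsto_pow_atTop_nhds_zero_of_lt_one (ENNReal.coe_lt_one_iff.2 hc))
      (Or.inr hbdd.ne)
  refine rhoCauchy_of_le_of_tendsto_zero hneg (fun n k => ?_) bound_tendsto
  calc ρ (T^[n + k] ω - T^[n] ω)
      = ρ (T^[n] (T^[k] ω) - T^[n] ω) := by rw [Function.iterate_add_apply]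
    _ ≤ ↑(c ^ n) * ρ (T^[k] ω - ω) := hT.iterate hTS n _ (hTS.iterate k hω) _ hω
    _ ≤ (c : ℝ≥0∞) ^ n * M := by
      rw [ENNReal.coe_pow]
      gcongr
      exact le_iSup (fun n => ρ (T^[n] ω - ω)) k

end RhoLipschitzOnWith

end AddCommGroup

section Modular

variable {ρ : X → ℝ≥0∞}

theorem IsModular.half_smul_sub_le (hρ : IsModular ρ) (x y : X) :
    ρ ((1 / 2 : ℝ) • (x - y)) ≤ ρ x + ρ y := by
  obtain ⟨-, hneg, hconvex⟩ := hρ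
  calc ρ ((1 / 2 : ℝ) • (x - y))
      = ρ ((1 / 2 : ℝ) • x + (1 / 2 : ℝ) • -y) := by rw [← smul_add, sub_eq_add_neg]
    _ ≤ ρ x + ρ (-y) := hconvex _ _ _ _ (by norm_num) (by norm_num) (by norm_num)
    _ = ρ x + ρ y := by rw [hneg]

theorem IsModular.sub_le (hρ : IsModular ρ) (x y : X) :
    ρ (x - y) ≤ ρ ((2 : ℝ) • x) + ρ ((2 : ℝ) • y) := by
  have half_smul_two_smul : (1 / 2 : ℝ) • ((2 : ℝ) • x - (2 : ℝ) • y) = x - y := by module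
  simpa only [half_smul_two_smul] using hρ.half_smul_sub_le ((2 : ℝ) • x) ((2 : ℝ) • y)

theorem IsModular.iSup_sub_lt_top (hρ : IsModular ρ) {ι : Type*} {x : ι → X}
    (hx : (⨆ i, ρ ((2 : ℝ) • x i)) < ⊤) (j : ι) : (⨆ i, ρ (x i - x j)) < ⊤ := by
  have le_sup (i : ι) : ρ ((2 : ℝ) • x i) ≤ ⨆ i, ρ ((2 : ℝ) • x i) :=
    le_iSup (fun i => ρ ((2 : ℝ) • x i)) i
  calc ⨆ i, ρ (x i - x j)
      ≤ (⨆ i, ρ ((2 : ℝ) • x i)) + ⨆ i, ρ ((2 : ℝ) • x i) :=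
        iSup_le fun i => (hρ.sub_le _ _).trans (add_le_add (le_sup i) (le_sup j))
    _ < ⊤ := ENNReal.add_lt_top.2 ⟨hx, hx⟩

theorem RhoTendsto.unique (hρ : IsModular ρ) {x : ℕ → X} {a b : X}
    (ha : RhoTendsto ρ x a) (hb : RhoTendsto ρ x b) : a = b := by
  have sum_tendsto : Tendsto (fun n => ρ (x n - b) + ρ (x n - a)) atTop (𝓝 0) := by
    simpa only [add_zero] using Tendsto.add hb ha
  have half_le (n : ℕ) : ρ ((1 / 2 : ℝ) • (a - b)) ≤ ρ (x n - b) + ρ (x n - a) := by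
    rw [← sub_sub_sub_cancel_left b a (x n)]
    exact hρ.half_smul_sub_le (x n - b) (x n - a)
  have half_eq_zero : (1 / 2 : ℝ) • (a - b) = 0 :=
    (hρ.1 _).1 (nonpos_iff_eq_zero.1 (ge_of_tendsto' sum_tendsto half_le))
  exact sub_eq_zero.1 ((smul_eq_zero_iff_right (by norm_num)).1 half_eq_zero)

theorem banach_contraction_modular_general (hρ : IsModular ρ) (hcomplete : RhoComplete ρ)
    {T : X → X} (hTS : Set.MapsTo T (modularSpace ρ) (modularSpace ρ)) {c : ℝ≥0} (hc : c < 1)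
    (hT : RhoLipschitzOnWith ρ c T (modularSpace ρ)) {ω : X} (hω : ω ∈ modularSpace ρ)
    (hbdd : (⨆ n, ρ (T^[n] ω - ω)) < ⊤) : ∃ x ∈ modularSpace ρ, T x = x := by
  have orbit_mem (n : ℕ) : T^[n] ω ∈ modularSpace ρ := hTS.iterate n hω
  obtain ⟨a, ha, orbit_tendsto⟩ :=
    hcomplete _ orbit_mem (hT.rhoCauchy_iterate hρ.2.1 hc hTS hω hbdd)
  have succ_tendsto : RhoTendsto ρ (fun n => T^[n + 1] ω) (T a) := by
    simpa only [Function.iterate_succ_apply'] using hT.rhoTendsto orbit_mem ha orbit_tendsto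
  exact ⟨a, ha, succ_tendsto.unique hρ orbit_tendsto.comp_succ⟩

end Modular

/-- Banach contraction principle in complete modular spaces
with the Fatou property. -/
theorem banach_contraction_modular (ρ : X → ℝ≥0∞) (hmod : IsModular ρ)
    (hcomplete : RhoComplete ρ) (hFatou : FatouProperty ρ)
    (T : X → X) (hT : ∀ x ∈ modularSpace ρ, T x ∈ modularSpace ρ)
    (c : ℝ≥0) (hc : c < 1)
    (hcontr : ∀ x ∈ modularSpace ρ, ∀ y ∈ modularSpace ρ,
      ρ (T x - T y) ≤ (c : ℝ≥0∞) * ρ (x - y))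
    (ω : X) (hω : ω ∈ modularSpace ρ)
    (hsup : (⨆ n ≥ 1, ρ ((2 : ℝ) • T^[n] ω)) < ⊤) :
    ∃ x ∈ modularSpace ρ, T x = x := by
  rw [iSup_ge_eq_iSup_nat_add] at hsup
  exact banach_contraction_modular_general hmod hcomplete hT hc hcontr (hT ω hω)
    (hmod.iSup_sub_lt_top hsup 0)
end

section
/- Let X_ρ be a ρ-complete modular space whose modular ρ satisfies the Δ₂-type condition, i.e., there exists k > 0 such that ρ(2x) ≤ k·ρ(x) for all x ∈ X_ρ. If T : X_ρ → X_ρ is a mapping for which there exists c ∈ [0,1) with ρ(Tx − Ty) ≤ c·ρ(x − y) for all x, y ∈ X_ρ, then T has a fixed point. -/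
open Filter Topology ENNReal NNReal

variable {X : Type*} [AddCommGroup X] [Module ℝ X]

/-!
Convexity at `1/2` and the `Δ₂`-type condition give `ρ (x + y) ≤ k * (ρ x + ρ y)` on `X_ρ`, and
halving a vector repeatedly shows that `ρ` is finite there. Hence `ρ (x - y)` is a `b`-metric on
`X_ρ`, a metric whose triangle inequality is relaxed by the factor `k`.

In a `b`-metric space summing the steps of an orbit of a contraction fails: each use of the
triangle inequality costs a factor `k`, and `k * c` may exceed `1`. Instead, fix `N` with
`k * c ^ N < 1`. One use of the triangle inequality gives
`d x (f^[N + m] x) ≤ k * d x (f^[N] x) + k * c ^ N * d x (f^[m] x)`, so the orbit is bounded, and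
applying `f^[n]` to a bounded orbit shrinks it by `c ^ n`: it is Cauchy.
-/

section BMetric

variable {α : Type*} {d : α → α → ℝ≥0∞} {k : ℝ≥0} {c : ℝ≥0∞} {f : α → α}

/-- A `b`-metric with constant `k`: a metric except that the triangle inequality is relaxed by the
factor `k`. Values are taken in `ℝ≥0∞`, with finiteness as a separate field. -/
structure IsBMetric (d : α → α → ℝ≥0∞) (k : ℝ≥0) : Prop where
  eq_zero_iff : ∀ x y, d x y = 0 ↔ x = y
  symm : ∀ x y, d x y = d y x
  triangle : ∀ x y z, d x z ≤ k * (d x y + d y z)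
  ne_top : ∀ x y, d x y ≠ ∞

theorem exists_forall_le_of_apply_add_le {a : ℕ → ℝ≥0∞} (ha : ∀ n, a n ≠ ∞) {N : ℕ} (hN : 0 < N)
    {A r : ℝ≥0∞} (hA : A ≠ ∞) (hr : r < 1) (h : ∀ m, a (N + m) ≤ A + r * a m) :
    ∃ M ≠ ∞, ∀ n, a n ≤ M := by
  set S := ∑ i ∈ Finset.range N, a i
  have hS_top : S ≠ ∞ := ENNReal.sum_ne_top.2 fun i _ => ha i
  have hr_sub : 1 - r ≠ 0 := tsub_eq_zero_iff_le.not.2 hr.not_ge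
  set M := (1 - r)⁻¹ * (S + A) with hM
  have hM_eq : S + A + r * M = M := by
    calc S + A + r * M = (1 - r) * M + r * M := by
          rw [hM, ENNReal.mul_inv_cancel_left hr_sub (by finiteness)]
      _ = M := by rw [← add_mul, tsub_add_cancel_of_le hr.le, one_mul]
  refine ⟨M, by finiteness, fun n => ?_⟩
  induction n using Nat.strong_induction_on with
  | _ n ih =>
    rcases lt_or_ge n N with hn | hn
    · calc a n ≤ S := Finset.single_le_sum_of_canonicallyOrdered (Finset.mem_range.2 hn)
        _ ≤ S + A + r * M := le_self_add.trans le_self_add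
        _ = M := hM_eq
    · obtain ⟨m, rfl⟩ := Nat.exists_eq_add_of_le hn
      calc a (N + m) ≤ A + r * a m := h m
        _ ≤ A + r * M := by gcongr; exact ih m (by lia)
        _ ≤ S + A + r * M := by gcongr; exact le_add_self
        _ = M := hM_eq

theorem apply_iterate_le_pow_mul (hf : ∀ x y, d (f x) (f y) ≤ c * d x y) (n : ℕ) (x y : α) :
    d (f^[n] x) (f^[n] y) ≤ c ^ n * d x y := by
  induction n with
  | zero => simp
  | succ n ih =>
    calc d (f^[n + 1] x) (f^[n + 1] y)
        ≤ c * d (f^[n] x) (f^[n] y) := by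
          simpa only [Function.iterate_succ_apply'] using hf _ _
      _ ≤ c * (c ^ n * d x y) := by gcongr
      _ = c ^ (n + 1) * d x y := by ring

theorem exists_pos_mul_pow_lt_one (k : ℝ≥0) (hc : c < 1) : ∃ N : ℕ, 0 < N ∧ k * c ^ N < 1 := by
  have hlim : Tendsto (fun n : ℕ => k * c ^ n) atTop (𝓝 0) := by
    simpa using ENNReal.Tendsto.const_mul (ENNReal.tendsto_pow_atTop_nhds_zero_of_lt_one hc)
      (Or.inr ENNReal.coe_ne_top)
  exact ((eventually_gt_atTop 0).and (hlim.eventually_lt_const one_pos)).exists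

namespace IsBMetric

theorem exists_forall_apply_iterate_le (hd : IsBMetric d k) (hc : c < 1)
    (hf : ∀ x y, d (f x) (f y) ≤ c * d x y) (x : α) :
    ∃ M ≠ ∞, ∀ n, d x (f^[n] x) ≤ M := by
  obtain ⟨N, hN, hkc⟩ := exists_pos_mul_pow_lt_one k hc
  have hstep_top : k * d x (f^[N] x) ≠ ∞ := ENNReal.mul_ne_top ENNReal.coe_ne_top (hd.ne_top _ _)
  refine exists_forall_le_of_apply_add_le (fun n => hd.ne_top _ _) hN hstep_top hkc fun m => ?_
  calc d x (f^[N + m] x)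
      ≤ k * (d x (f^[N] x) + d (f^[N] x) (f^[N + m] x)) := hd.triangle _ _ _
    _ ≤ k * (d x (f^[N] x) + c ^ N * d x (f^[m] x)) := by
      rw [Function.iterate_add_apply]
      gcongr
      exact apply_iterate_le_pow_mul hf N x _
    _ = k * d x (f^[N] x) + k * c ^ N * d x (f^[m] x) := by ring

theorem tendsto_apply_iterate_iterate (hd : IsBMetric d k) (hc : c < 1)
    (hf : ∀ x y, d (f x) (f y) ≤ c * d x y) (x : α) :
    Tendsto (fun p : ℕ × ℕ => d (f^[p.1] x) (f^[p.2] x)) (atTop ×ˢ atTop) (𝓝 0) := by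
  obtain ⟨M, hM_top, hM⟩ := hd.exists_forall_apply_iterate_le hc hf x
  have bound_of_le {m n : ℕ} (hmn : m ≤ n) : d (f^[m] x) (f^[n] x) ≤ c ^ m * M := by
    obtain ⟨l, rfl⟩ := Nat.exists_eq_add_of_le hmn
    rw [Function.iterate_add_apply]
    exact (apply_iterate_le_pow_mul hf m x _).trans (by gcongr; exact hM l)
  have bound (p : ℕ × ℕ) : d (f^[p.1] x) (f^[p.2] x) ≤ c ^ p.1 * M + c ^ p.2 * M := by
    rcases le_total p.1 p.2 with h | h
    · exact (bound_of_le h).trans le_self_add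
    · rw [hd.symm]
      exact (bound_of_le h).trans le_add_self
  have hlim : Tendsto (fun n : ℕ => c ^ n * M) atTop (𝓝 0) := by
    simpa using ENNReal.Tendsto.mul_const (ENNReal.tendsto_pow_atTop_nhds_zero_of_lt_one hc)
      (Or.inr hM_top)
  refine tendsto_of_tendsto_of_tendsto_of_le_of_le tendsto_const_nhds ?_ (fun _ => zero_le) bound
  simpa using (hlim.comp tendsto_fst).add (hlim.comp tendsto_snd)

theorem isFixedPt_of_tendsto_iterate (hd : IsBMetric d k) (hc : c ≠ ∞)
    (hf : ∀ x y, d (f x) (f y) ≤ c * d x y) {x a : α}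
    (ha : Tendsto (fun n => d (f^[n] x) a) atTop (𝓝 0)) : Function.IsFixedPt f a := by
  have bound (n : ℕ) : d (f a) a ≤ k * (c * d (f^[n] x) a + d (f^[n + 1] x) a) := by
    refine (hd.triangle (f a) (f^[n + 1] x) a).trans ?_
    gcongr
    rw [Function.iterate_succ_apply', hd.symm _ a]
    exact hf a _
  have hlim : Tendsto (fun n => k * (c * d (f^[n] x) a + d (f^[n + 1] x) a)) atTop (𝓝 0) := by
    have hsum := (ENNReal.Tendsto.const_mul ha (Or.inr hc)).add
      (ha.comp (tendsto_add_atTop_nat 1))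
    simpa using ENNReal.Tendsto.const_mul hsum (Or.inr (ENNReal.coe_ne_top (r := k)))
  exact (hd.eq_zero_iff _ _).1 (nonpos_iff_eq_zero.1 (ge_of_tendsto' hlim bound))

theorem exists_isFixedPt [Nonempty α] (hd : IsBMetric d k)
    (hcomplete : ∀ u : ℕ → α,
      Tendsto (fun p : ℕ × ℕ => d (u p.1) (u p.2)) (atTop ×ˢ atTop) (𝓝 0) →
        ∃ a, Tendsto (fun n => d (u n) a) atTop (𝓝 0))
    (hc : c < 1) (hf : ∀ x y, d (f x) (f y) ≤ c * d x y) : ∃ a, Function.IsFixedPt f a := by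
  obtain ⟨x⟩ := ‹Nonempty α›
  obtain ⟨a, ha⟩ := hcomplete (fun n => f^[n] x) (hd.tendsto_apply_iterate_iterate hc hf x)
  exact ⟨a, hd.isFixedPt_of_tendsto_iterate hc.ne_top hf ha⟩

end IsBMetric

end BMetric

section Modular

variable {ρ : X → ℝ≥0∞} {k : ℝ≥0} {x y : X}

theorem smul_mem_modularSpace (r : ℝ) (hx : x ∈ modularSpace ρ) : r • x ∈ modularSpace ρ := by
  have hlim : Tendsto (fun α : ℝ => α * r) (𝓝 0) (𝓝 0) := by
    simpa using (continuous_mul_const r).tendsto 0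
  exact (Tendsto.comp hx hlim).congr fun α => congrArg ρ (mul_smul α r x)

namespace IsModular

theorem map_half_smul_add_le (hmod : IsModular ρ) (x y : X) :
    ρ ((2⁻¹ : ℝ) • (x + y)) ≤ ρ x + ρ y := by
  rw [smul_add]
  exact hmod.2.2 x y 2⁻¹ 2⁻¹ (by norm_num) (by norm_num) (by norm_num)

theorem zero_mem_modularSpace (hmod : IsModular ρ) : (0 : X) ∈ modularSpace ρ := by
  change Tendsto (fun α : ℝ => ρ (α • (0 : X))) (𝓝 0) (𝓝 0)
  simp only [smul_zero, (hmod.1 0).2 rfl, tendsto_const_nhds]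

theorem add_mem_modularSpace (hmod : IsModular ρ) (hx : x ∈ modularSpace ρ)
    (hy : y ∈ modularSpace ρ) : x + y ∈ modularSpace ρ := by
  have hlim : Tendsto (fun α : ℝ => ρ (α • (2 : ℝ) • x) + ρ (α • (2 : ℝ) • y)) (𝓝 0) (𝓝 0) := by
    simpa using Tendsto.add (smul_mem_modularSpace 2 hx) (smul_mem_modularSpace 2 hy)
  refine tendsto_of_tendsto_of_tendsto_of_le_of_le tendsto_const_nhds hlim (fun _ => zero_le)
    fun α => ?_
  calc ρ (α • (x + y)) = ρ ((2⁻¹ : ℝ) • (α • (2 : ℝ) • x + α • (2 : ℝ) • y)) := by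
        congr 1; module
    _ ≤ ρ (α • (2 : ℝ) • x) + ρ (α • (2 : ℝ) • y) := hmod.map_half_smul_add_le _ _

/-- The modular space `X_ρ` as a linear subspace of `X`, which gives closure under subtraction. -/
def modularSubmodule (hmod : IsModular ρ) : Submodule ℝ X where
  carrier := modularSpace ρ
  zero_mem' := hmod.zero_mem_modularSpace
  add_mem' := hmod.add_mem_modularSpace
  smul_mem' r _ := smul_mem_modularSpace r

end IsModular

namespace Delta2Type

theorem map_two_pow_smul_le (hΔ : Delta2Type ρ k) (hx : x ∈ modularSpace ρ) (n : ℕ) :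
    ρ ((2 : ℝ) ^ n • x) ≤ k ^ n * ρ x := by
  induction n with
  | zero => simp
  | succ n ih =>
    calc ρ ((2 : ℝ) ^ (n + 1) • x) = ρ ((2 : ℝ) • (2 : ℝ) ^ n • x) := by rw [pow_succ', mul_smul]
      _ ≤ k * ρ ((2 : ℝ) ^ n • x) := hΔ _ (smul_mem_modularSpace _ hx)
      _ ≤ k * (k ^ n * ρ x) := by gcongr
      _ = k ^ (n + 1) * ρ x := by ring

theorem map_ne_top (hΔ : Delta2Type ρ k) (hx : x ∈ modularSpace ρ) : ρ x ≠ ∞ := by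
  have hpow : Tendsto (fun n : ℕ => (2⁻¹ : ℝ) ^ n) atTop (𝓝 0) :=
    _root_.tendsto_pow_atTop_nhds_zero_of_lt_one (by norm_num) (by norm_num)
  have hlim : Tendsto (fun α : ℝ => ρ (α • x)) (𝓝 0) (𝓝 0) := hx
  obtain ⟨n, hn⟩ := ((hlim.comp hpow).eventually_lt_const ENNReal.zero_lt_top).exists
  have hle : ρ x ≤ k ^ n * ρ ((2⁻¹ : ℝ) ^ n • x) := by
    simpa [smul_smul] using hΔ.map_two_pow_smul_le (smul_mem_modularSpace ((2⁻¹ : ℝ) ^ n) hx) n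
  exact ne_top_of_le_ne_top (by finiteness) hle

theorem map_add_le (hΔ : Delta2Type ρ k) (hmod : IsModular ρ) (hxy : x + y ∈ modularSpace ρ) :
    ρ (x + y) ≤ k * (ρ x + ρ y) := by
  calc ρ (x + y) = ρ ((2 : ℝ) • (2⁻¹ : ℝ) • (x + y)) := by rw [smul_inv_smul₀ two_ne_zero]
    _ ≤ k * ρ ((2⁻¹ : ℝ) • (x + y)) := hΔ _ (smul_mem_modularSpace _ hxy)
    _ ≤ k * (ρ x + ρ y) := by gcongr; exact hmod.map_half_smul_add_le x y

theorem isBMetric (hΔ : Delta2Type ρ k) (hmod : IsModular ρ) :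
    IsBMetric (fun x y : modularSpace ρ => ρ (x - y)) k where
  eq_zero_iff x y := by rw [hmod.1, sub_eq_zero, Subtype.coe_inj]
  symm x y := by rw [← hmod.2.1, neg_sub]
  triangle x y z := by
    have hxz : (x - y + (y - z) : X) ∈ modularSpace ρ := by
      rw [sub_add_sub_cancel]
      exact hmod.modularSubmodule.sub_mem x.2 z.2
    simpa only [sub_add_sub_cancel] using hΔ.map_add_le hmod hxz
  ne_top x y := hΔ.map_ne_top (hmod.modularSubmodule.sub_mem x.2 y.2)

end Delta2Type

end Modular

/-- Banach contraction principle in complete modular spaces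
satisfying the Δ₂-type condition. -/
theorem banach_contraction_modular_delta2Type (ρ : X → ℝ≥0∞) (hmod : IsModular ρ)
    (hcomplete : RhoComplete ρ)
    (k : ℝ≥0) (hk : 0 < k) (hΔ : Delta2Type ρ k)
    (T : X → X) (hT : ∀ x ∈ modularSpace ρ, T x ∈ modularSpace ρ)
    (c : ℝ≥0) (hc : c < 1)
    (hcontr : ∀ x ∈ modularSpace ρ, ∀ y ∈ modularSpace ρ,
      ρ (T x - T y) ≤ (c : ℝ≥0∞) * ρ (x - y)) :
    ∃ x ∈ modularSpace ρ, T x = x := by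
  have : Nonempty (modularSpace ρ) := ⟨0, hmod.zero_mem_modularSpace⟩
  have complete (u : ℕ → modularSpace ρ) (hu : RhoCauchy ρ fun n => u n) :
      ∃ a : modularSpace ρ, RhoTendsto ρ (fun n => u n) a := by
    obtain ⟨a, ha, hlim⟩ := hcomplete _ (fun n => (u n).2) hu
    exact ⟨⟨a, ha⟩, hlim⟩
  obtain ⟨a, ha⟩ := (hΔ.isBMetric hmod).exists_isFixedPt (f := Set.MapsTo.restrict T _ _ hT)
    complete (ENNReal.coe_lt_one_iff.2 hc) fun x y => hcontr x x.2 y y.2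
  exact ⟨a, a.2, congrArg Subtype.val ha⟩
end

section
/- Let ρ be a modular on a real vector space X with the Fatou property. Suppose {x_n} is a sequence in X_ρ and {α_n} is a nonincreasing sequence in [0,∞) converging to α₀ such that ρ(x_n − x_m) ≤ α_n − α_m whenever n ≤ m, and suppose ρ(x_n − x₀) → 0 for some x₀ ∈ X_ρ. Then ρ(x_n − x₀) ≤ α_n − α₀ for every n. -/
open Filter Topology ENNReal NNReal

variable {X : Type*} [AddCommGroup X] [Module ℝ X]

section AddCommGroup

variable {G : Type*} [AddCommGroup G] {ρ : G → ℝ≥0∞} {x : ℕ → G} {x₀ : G}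

theorem rhoTendsto_const (h0 : ρ 0 = 0) (a : G) : RhoTendsto ρ (fun _ => a) a := by
  simp [RhoTendsto, h0]

theorem FatouProperty.le_liminf_of_rhoTendsto (hFatou : FatouProperty ρ) (h0 : ρ 0 = 0)
    (hlim : RhoTendsto ρ x x₀) (a : G) :
    ρ (a - x₀) ≤ atTop.liminf (fun m => ρ (a - x m)) :=
  hFatou (fun _ => a) x a x₀ (rhoTendsto_const h0 a) hlim

theorem FatouProperty.le_of_rhoTendsto_of_eventually_le (hFatou : FatouProperty ρ)
    (h0 : ρ 0 = 0) (hlim : RhoTendsto ρ x x₀) {a : G} {c : ℕ → ℝ≥0∞} {c₀ : ℝ≥0∞}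
    (hc : Tendsto c atTop (𝓝 c₀)) (hle : ∀ᶠ m in atTop, ρ (a - x m) ≤ c m) :
    ρ (a - x₀) ≤ c₀ :=
  calc
    ρ (a - x₀) ≤ atTop.liminf (fun m => ρ (a - x m)) :=
      hFatou.le_liminf_of_rhoTendsto h0 hlim a
    _ ≤ atTop.liminf c := liminf_le_liminf hle
    _ = c₀ := hc.liminf_eq

theorem rho_control_passes_to_limit_general (h0 : ρ 0 = 0) (hFatou : FatouProperty ρ)
    {α : ℕ → ℝ} {α₀ : ℝ} (hαlim : Tendsto α atTop (𝓝 α₀))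
    (hctrl : ∀ n m : ℕ, n ≤ m → ρ (x n - x m) ≤ ENNReal.ofReal (α n - α m))
    (hlim : RhoTendsto ρ x x₀) (n : ℕ) :
    ρ (x n - x₀) ≤ ENNReal.ofReal (α n - α₀) := by
  have hbound : Tendsto (fun m => ENNReal.ofReal (α n - α m)) atTop
      (𝓝 (ENNReal.ofReal (α n - α₀))) :=
    ENNReal.tendsto_ofReal (hαlim.const_sub (α n))
  exact hFatou.le_of_rhoTendsto_of_eventually_le h0 hlim hbound
    ((eventually_ge_atTop n).mono (hctrl n))

end AddCommGroup

/-- Under the Fatou property, the control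
`ρ(x_n − x_m) ≤ α_n − α_m` passes to the limit: `ρ(x_n − x₀) ≤ α_n − α₀`. -/
theorem rho_control_passes_to_limit (ρ : X → ℝ≥0∞) (hmod : IsModular ρ)
    (hFatou : FatouProperty ρ)
    (x : ℕ → X) (hx : ∀ n, x n ∈ modularSpace ρ)
    (α : ℕ → ℝ) (hα0 : ∀ n, 0 ≤ α n) (hαmono : Antitone α)
    (α₀ : ℝ) (hαlim : Filter.Tendsto α Filter.atTop (𝓝 α₀))
    (hctrl : ∀ n m : ℕ, n ≤ m → ρ (x n - x m) ≤ ENNReal.ofReal (α n - α m))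
    (x₀ : X) (hx₀ : x₀ ∈ modularSpace ρ) (hlim : RhoTendsto ρ x x₀) :
    ∀ n, ρ (x n - x₀) ≤ ENNReal.ofReal (α n - α₀) :=
  rho_control_passes_to_limit_general ((hmod.1 0).2 rfl) hFatou hαlim hctrl hlim
end
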